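/- The map J_Δ : {(λ, d, μ) | λ, μ ∈ Λ_Δ(n,r), d ∈ D^Δ_{λ,μ}} → Θ_Δ(n,r) sending (λ, d, μ) to the matrix (|R^λ_k ∩ d(R^μ_l)|)_{k,l∈ℤ} is a well-defined bijection. Moreover, if A = J_Δ(λ,d,μ), then the row sums of A are ro(A) = λ and the column sums are co(A) = μ. -/

import Mathlib

open scoped Classical

noncomputable section

/-- The extended affine symmetric group `𝔖_{Δ,r}`: permutations `w` of `ℤ`
with `w (i + r) = w i + r` for all `i`. -/
def AffSym (r : ℕ) : Subgroup (Equiv.Perm ℤ) where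
  carrier := {w | ∀ i : ℤ, w (i + r) = w i + r}
  one_mem' := fun _ => rfl
  mul_mem' := by
    intro a b ha hb i
    simp only [Equiv.Perm.mul_apply, hb i, ha (b i)]
  inv_mem' := by
    intro a ha i
    apply a.injective
    rw [ha (a⁻¹ i)]
    simp

/-- The underlying function of the affine transposition `(i,j)`. -/
def tFun (r : ℕ) (i j : ℤ) : ℤ → ℤ := fun k =>
  if (r : ℤ) ∣ (k - i) then j + (k - i)
  else if (r : ℤ) ∣ (k - j) then i + (k - j)
  else k

theorem tFun_invol (r : ℕ) (i j : ℤ) (h : ¬ (r : ℤ) ∣ (j - i)) :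
    Function.Involutive (tFun r i j) := by
  intro k
  by_cases h1 : (r : ℤ) ∣ (k - i)
  · have e1 : tFun r i j k = j + (k - i) := by simp only [tFun]; rw [if_pos h1]
    have h2 : ¬ (r : ℤ) ∣ (j + (k - i) - i) := by
      intro hd
      apply h
      have h5 := hd.sub h1
      have h6 : j + (k - i) - i - (k - i) = j - i := by ring
      rwa [h6] at h5
    have h3 : (r : ℤ) ∣ (j + (k - i) - j) := by simpa using h1
    rw [e1]; simp only [tFun]; rw [if_neg h2, if_pos h3]; ring
  · by_cases h2 : (r : ℤ) ∣ (k - j)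
    · have e1 : tFun r i j k = i + (k - j) := by
        simp only [tFun]; rw [if_neg h1, if_pos h2]
      have h3 : (r : ℤ) ∣ (i + (k - j) - i) := by simpa using h2
      rw [e1]; simp only [tFun]; rw [if_pos h3]; ring
    · have e1 : tFun r i j k = k := by simp only [tFun]; rw [if_neg h1, if_neg h2]
      rw [e1, e1]

/-- The affine transposition `(i,j) ∈ W_r` (defined to be `1` in the degenerate
case `i ≡ j (mod r)`). -/
def tPerm (r : ℕ) (i j : ℤ) : Equiv.Perm ℤ :=
  if h : (r : ℤ) ∣ (j - i) then 1 else Function.Involutive.toPerm _ (tFun_invol r i j h)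

/-- The set of Coxeter generators `s_1, …, s_r` of `W_r`. -/
def sGen (r : ℕ) : Set (Equiv.Perm ℤ) :=
  {w | ∃ i : ℤ, 1 ≤ i ∧ i ≤ (r : ℤ) ∧ w = tPerm r i (i + 1)}

/-- The affine Weyl group `W_r`, generated by `s_1, …, s_r`. -/
def WGrp (r : ℕ) : Subgroup (Equiv.Perm ℤ) := Subgroup.closure (sGen r)

/-- Length of an element of `W_r`: the minimal length of an expression
as a product of the generators `s_1, …, s_r`. -/
def lenW (r : ℕ) (x : Equiv.Perm ℤ) : ℕ :=
  sInf {m | ∃ l : List (Equiv.Perm ℤ), l.length = m ∧ (∀ s ∈ l, s ∈ sGen r) ∧ l.prod = x}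

/-- The shift permutation `ρ : j ↦ j + 1`. -/
def rhoP : Equiv.Perm ℤ := Equiv.addRight 1

/-- For `w = ρ^a x` with `x ∈ W_r`, recovers the exponent `a`. -/
def shiftIdx (r : ℕ) (w : Equiv.Perm ℤ) : ℤ :=
  (∑ i ∈ Finset.Icc (1 : ℤ) (r : ℤ), (w i - i)) / r

/-- Length on `𝔖_{Δ,r}`: writing `w = ρ^a x` with `x ∈ W_r`, `ℓ(w) = ℓ(x)`. -/
def alen (r : ℕ) (w : Equiv.Perm ℤ) : ℕ :=
  lenW r ((rhoP ^ shiftIdx r w)⁻¹ * w)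

/-- The set `T` of affine reflections `(i,j)`, `i < j`, `i ≢ j (mod r)`. -/
def TSet (r : ℕ) : Set (Equiv.Perm ℤ) :=
  {t | ∃ i j : ℤ, i < j ∧ ¬ (r : ℤ) ∣ (j - i) ∧ t = tPerm r i j}

/-- Bruhat order on `W_r`: `y ≤ w` iff `w = t_1 ⋯ t_m y` with all `t_i ∈ T` and
`ℓ(t_i ⋯ t_m y) > ℓ(t_{i+1} ⋯ t_m y)` for all `i`. -/
def bruhatLE (r : ℕ) (y w : Equiv.Perm ℤ) : Prop :=
  ∃ l : List (Equiv.Perm ℤ), (∀ t ∈ l, t ∈ TSet r) ∧ w = l.prod * y ∧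
    ∀ k, k < l.length →
      lenW r ((l.drop (k + 1)).prod * y) < lenW r ((l.drop k).prod * y)

/-- Bruhat order extended to `𝔖_{Δ,r}`: `ρ^a y ≤ ρ^b w` iff `a = b` and `y ≤ w`. -/
def abruhatLE (r : ℕ) (y w : Equiv.Perm ℤ) : Prop :=
  shiftIdx r y = shiftIdx r w ∧
    bruhatLE r ((rhoP ^ shiftIdx r y)⁻¹ * y) ((rhoP ^ shiftIdx r w)⁻¹ * w)

/-- `Λ_Δ(n,r)`: `n`-periodic sequences of naturals summing to `r` over a period. -/
def LambdaSet (n r : ℕ) : Set (ℤ → ℕ) :=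
  {lam | (∀ i : ℤ, lam i = lam (i - n)) ∧ ∑ i ∈ Finset.Icc (1 : ℤ) (n : ℤ), lam i = r}

/-- The interval `R^λ_m ⊆ ℤ`; for `m = i + kn` with `1 ≤ i ≤ n` this is
`{λ_{k,i-1}+1, …, λ_{k,i-1}+λ_i}` where `λ_{k,i-1} = kr + λ_1 + ⋯ + λ_{i-1}`. -/
def Rset (n r : ℕ) (lam : ℤ → ℕ) (m : ℤ) : Set ℤ :=
  {a | ((m - 1) / n) * r + ∑ t ∈ Finset.Icc (1 : ℤ) ((m - 1) % n), (lam t : ℤ) < a ∧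
       a ≤ ((m - 1) / n) * r + ∑ t ∈ Finset.Icc (1 : ℤ) ((m - 1) % n + 1), (lam t : ℤ)}

/-- The finite symmetric group `𝔖_r ⊆ W_r`, generated by `s_1, …, s_{r-1}`. -/
def SymFin (r : ℕ) : Subgroup (Equiv.Perm ℤ) :=
  Subgroup.closure {w | ∃ i : ℤ, 1 ≤ i ∧ i < (r : ℤ) ∧ w = tPerm r i (i + 1)}

/-- The Young subgroup `𝔖_λ`: elements of `𝔖_r` stabilizing each `R^λ_i`, `1 ≤ i ≤ n`. -/
def YoungSet (n r : ℕ) (lam : ℤ → ℕ) : Set (Equiv.Perm ℤ) :=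
  {w | w ∈ SymFin r ∧ ∀ i : ℤ, 1 ≤ i → i ≤ (n : ℤ) → w '' Rset n r lam i = Rset n r lam i}

/-- `D^Δ_λ`: distinguished right coset representatives. -/
def DRep (n r : ℕ) (lam : ℤ → ℕ) : Set (Equiv.Perm ℤ) :=
  {d | d ∈ AffSym r ∧ ∀ w ∈ YoungSet n r lam, alen r (w * d) = alen r w + alen r d}

/-- `D^Δ_{λ,μ} = D^Δ_λ ∩ (D^Δ_μ)⁻¹`. -/
def DRep2 (n r : ℕ) (lam mu : ℤ → ℕ) : Set (Equiv.Perm ℤ) :=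
  {d | d ∈ DRep n r lam ∧ d⁻¹ ∈ DRep n r mu}

/-- The matrix `J_Δ(λ,d,μ) = (|R^λ_k ∩ d(R^μ_l)|)_{k,l}`. -/
def JMat (n r : ℕ) (lam mu : ℤ → ℕ) (d : Equiv.Perm ℤ) : ℤ → ℤ → ℕ :=
  fun k l => (Rset n r lam k ∩ (d '' Rset n r mu l)).ncard

/-- `Θ_Δ(n)`: ℕ-matrices, `n`-periodic along the diagonal, with finite rows and columns. -/
def ThetaSet (n : ℕ) : Set (ℤ → ℤ → ℕ) :=
  {A | (∀ i j : ℤ, A (i + n) (j + n) = A i j) ∧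
       (∀ i : ℤ, {j : ℤ | A i j ≠ 0}.Finite) ∧
       (∀ j : ℤ, {i : ℤ | A i j ≠ 0}.Finite)}

/-- `σ(A) = Σ_{1 ≤ i ≤ n, j ∈ ℤ} a_{i,j}`. -/
def sigmaTot (n : ℕ) (A : ℤ → ℤ → ℕ) : ℕ :=
  ∑ᶠ j : ℤ, ∑ i ∈ Finset.Icc (1 : ℤ) (n : ℤ), A i j

/-- Row sums. -/
def roM (A : ℤ → ℤ → ℕ) : ℤ → ℕ := fun i => ∑ᶠ j : ℤ, A i j

/-- Column sums. -/
def coM (A : ℤ → ℤ → ℕ) : ℤ → ℕ := fun j => ∑ᶠ i : ℤ, A i j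

/-- `σ_{i,j}(A)`: for `i < j` the sum `Σ_{s ≤ i, t ≥ j} a_{s,t}`; for `i > j` the
sum `Σ_{s ≥ i, t ≤ j} a_{s,t}`. -/
def sigmaOrd (A : ℤ → ℤ → ℕ) (i j : ℤ) : ℕ :=
  if i < j then ∑ᶠ (p : ℤ × ℤ) (_ : p.1 ≤ i ∧ j ≤ p.2), A p.1 p.2
  else ∑ᶠ (p : ℤ × ℤ) (_ : i ≤ p.1 ∧ p.2 ≤ j), A p.1 p.2

/-- The map `η_m : A ↦ (a_{i, mn+j})_{i,j}`. -/
def etaM (n : ℕ) (m : ℤ) (A : ℤ → ℤ → ℕ) : ℤ → ℤ → ℕ := fun i j => A i (m * n + j)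

/-- The double coset `𝔖_λ d 𝔖_μ`. -/
def DCoset (n r : ℕ) (lam mu : ℤ → ℕ) (d : Equiv.Perm ℤ) : Set (Equiv.Perm ℤ) :=
  {w | ∃ u ∈ YoungSet n r lam, ∃ v ∈ YoungSet n r mu, w = u * d * v}

/-- `d_A = Σ a_{i,j} a_{k,l}` over `1 ≤ i ≤ n`, `k ≤ i`, `j < l`. -/
def dWt (n : ℕ) (A : ℤ → ℤ → ℕ) : ℕ :=
  ∑ᶠ (q : (ℤ × ℤ) × ℤ × ℤ)
    (_ : 1 ≤ q.1.1 ∧ q.1.1 ≤ (n : ℤ) ∧ q.2.1 ≤ q.1.1 ∧ q.1.2 < q.2.2),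
    A q.1.1 q.1.2 * A q.2.1 q.2.2

/-- The embedding `A ↦ Ã` from `Θ_Δ(n)` to `Θ_Δ(N)`. -/
def tildeM (n N : ℕ) (A : ℤ → ℤ → ℕ) : ℤ → ℤ → ℕ := fun k l =>
  let k0 : ℤ := (k - 1) % N + 1
  let l' : ℤ := l - ((k - 1) / N) * N
  let l0 : ℤ := (l' - 1) % N + 1
  let m : ℤ := (l' - 1) / N
  if k0 ≤ n ∧ l0 ≤ n then A k0 (l0 + m * n) else 0

/-- `Θ̃_Δ(n)`: ℤ-matrices with nonnegative off-diagonal entries, `n`-periodic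
along the diagonal, with finite rows and columns. -/
def ThetaTSet (n : ℕ) : Set (ℤ → ℤ → ℤ) :=
  {A | (∀ i j : ℤ, i ≠ j → 0 ≤ A i j) ∧ (∀ i j : ℤ, A (i + n) (j + n) = A i j) ∧
       (∀ i : ℤ, {j : ℤ | A i j ≠ 0}.Finite) ∧ (∀ j : ℤ, {i : ℤ | A i j ≠ 0}.Finite)}

/-- Row sums (ℤ-entry version). -/
def roMZ (A : ℤ → ℤ → ℤ) : ℤ → ℤ := fun i => ∑ᶠ j : ℤ, A i j

/-- Column sums (ℤ-entry version). -/
def coMZ (A : ℤ → ℤ → ℤ) : ℤ → ℤ := fun j => ∑ᶠ i : ℤ, A i j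

/-- `σ_{i,j}` (ℤ-entry version). -/
def sigmaOrdZ (A : ℤ → ℤ → ℤ) (i j : ℤ) : ℤ :=
  if i < j then ∑ᶠ (p : ℤ × ℤ) (_ : p.1 ≤ i ∧ j ≤ p.2), A p.1 p.2
  else ∑ᶠ (p : ℤ × ℤ) (_ : i ≤ p.1 ∧ p.2 ≤ j), A p.1 p.2

/-- The relation `B ⊑ A` on `Θ̃_Δ(n)`. -/
def sqLE (B A : ℤ → ℤ → ℤ) : Prop :=
  (∀ i j : ℤ, i ≠ j → sigmaOrdZ B i j ≤ sigmaOrdZ A i j) ∧ roMZ B = roMZ A ∧ coMZ B = coMZ A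

/-- The vector `v_a ∈ V = 𝔽[ε,ε⁻¹]^r`: for `a = i + kr` with `1 ≤ i ≤ r`,
`v_a = ε^{-k} v_i` where `v_1, …, v_r` is the standard basis. -/
def vb (F : Type*) [Field F] (r : ℕ) (a : ℤ) : Fin r → LaurentPolynomial F :=
  if h : 0 < r then
    Pi.single ⟨((a - 1) % (r : ℤ)).toNat, by
      have h1 : (0 : ℤ) < (r : ℤ) := by exact_mod_cast h
      have h2 : 0 ≤ (a - 1) % (r : ℤ) := Int.emod_nonneg _ (by omega)
      have h3 : (a - 1) % (r : ℤ) < (r : ℤ) := Int.emod_lt_of_pos _ h1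
      omega⟩
      (LaurentPolynomial.T (-((a - 1) / (r : ℤ))))
  else 0

/-- The bound `Σ_{1 ≤ j ≤ i} λ_j + kr` for `m = i + kn`, `1 ≤ i ≤ n`. -/
def bnd (n r : ℕ) (lam : ℤ → ℕ) (m : ℤ) : ℤ :=
  ((m - 1) / n) * r + ∑ t ∈ Finset.Icc (1 : ℤ) ((m - 1) % n + 1), (lam t : ℤ)

/-- The lattice-filtration subspace `L_m = span_𝔽{v_a | a ≤ Σ_{1≤j≤i} λ_j + kr}`. -/
def Lsub (F : Type*) [Field F] (n r : ℕ) (lam : ℤ → ℕ) (m : ℤ) :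
    Submodule F (Fin r → LaurentPolynomial F) :=
  Submodule.span F {x | ∃ a : ℤ, a ≤ bnd n r lam m ∧ x = vb F r a}

/-- The subspace `L'_m = span_𝔽{v_{d(a)} | a ≤ Σ_{1≤j≤i} μ_j + kr}`. -/
def Lsub' (F : Type*) [Field F] (n r : ℕ) (mu : ℤ → ℕ) (d : Equiv.Perm ℤ) (m : ℤ) :
    Submodule F (Fin r → LaurentPolynomial F) :=
  Submodule.span F {x | ∃ a : ℤ, a ≤ bnd n r mu m ∧ x = vb F r (d a)}
end

/-!
The length function on `𝔖_{Δ,r}` counts inversions modulo translation by `r`, so `d ∈ D^Δ_λ` if and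
only if `d⁻¹` is strictly increasing on every block `R^λ_k`.

Think of a matrix `A` as having `a_{k,l}` cells at each position `(k, l)`. Laying the cells out
along `ℤ` row by row numbers them bijectively, with row `k` filling `R^{ro(A)}_k`; the same is
true of the transpose of `A`. For `d ∈ D^Δ_{λ,μ}` with matrix `A`, monotonicity of `d⁻¹` on the
blocks `R^λ_k` and of `d` on the blocks `R^μ_l` forces `d` to carry the layout of the transpose
to the layout of `A`, cell by cell. Hence `A` determines `d`; conversely, the permutation defined
by matching the two layouts lies in `D^Δ_{ro(A),co(A)}` and has matrix `A`.
-/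

section Periodicity

theorem map_add_mul_of_map_add {f : ℤ → ℤ} {a b : ℤ} (hf : ∀ x, f (x + a) = f x + b) (x m : ℤ) :
    f (x + a * m) = f x + b * m := by
  have h := AddConstMapClass.map_add_zsmul (⟨f, hf⟩ : AddConstMap ℤ ℤ a b) x m
  simp only [smul_eq_mul, mul_comm m] at h
  exact h

theorem finite_range_of_periodic {α : Type*} {f : ℤ → α} {p : ℤ} (hp : 0 < p)
    (hf : Function.Periodic f p) : (Set.range f).Finite := by
  rw [← hf.image_Ioc hp 0]
  exact (Set.finite_Ioc _ _).image f

theorem toIocMod_zero_mem_Icc {p : ℤ} (hp : 0 < p) (x : ℤ) :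
    toIocMod hp 0 x ∈ Finset.Icc 1 p := by
  have := toIocMod_mem_Ioc hp 0 x
  simp only [Set.mem_Ioc, zero_add] at this
  exact Finset.mem_Icc.2 this

theorem toIocMod_zero_of_mem_Icc {p : ℤ} (hp : 0 < p) {x : ℤ} (hx : x ∈ Finset.Icc 1 p) :
    toIocMod hp 0 x = x := by
  rw [toIocMod_eq_self, zero_add]
  exact Finset.mem_Icc.1 hx

theorem toIocMod_zero_eq_add_mul {p : ℤ} (hp : 0 < p) (x : ℤ) :
    toIocMod hp 0 x = x + p * -toIocDiv hp 0 x := by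
  rw [toIocMod, smul_eq_mul]
  ring

variable {r : ℕ} {w : Equiv.Perm ℤ}

theorem apply_add_mul_of_mem_AffSym (hw : w ∈ AffSym r) (x m : ℤ) :
    w (x + r * m) = w x + r * m :=
  map_add_mul_of_map_add hw x m

theorem toIocMod_apply_toIocMod_of_mem_AffSym (hp : 0 < (r : ℤ)) (hw : w ∈ AffSym r) (x : ℤ) :
    toIocMod hp 0 (w (toIocMod hp 0 x)) = toIocMod hp 0 (w x) := by
  rw [toIocMod_zero_eq_add_mul hp x, apply_add_mul_of_mem_AffSym hw,
    mul_comm, ← smul_eq_mul, toIocMod_add_zsmul]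

theorem sum_comp_of_mem_AffSym {M : Type*} [AddCommMonoid M] (hw : w ∈ AffSym r) {f : ℤ → M}
    (hf : Function.Periodic f r) :
    ∑ i ∈ Finset.Icc (1 : ℤ) r, f (w i) = ∑ i ∈ Finset.Icc (1 : ℤ) r, f i := by
  obtain rfl | hr := r.eq_zero_or_pos
  · simp
  have hp : 0 < (r : ℤ) := by exact_mod_cast hr
  refine Finset.sum_nbij' (fun i => toIocMod hp 0 (w i)) (fun i => toIocMod hp 0 (w⁻¹ i))
    (fun i _ => toIocMod_zero_mem_Icc hp _) (fun i _ => toIocMod_zero_mem_Icc hp _)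
    (fun i hi => ?_) (fun i hi => ?_) (fun i _ => ?_)
  · rw [toIocMod_apply_toIocMod_of_mem_AffSym hp ((AffSym r).inv_mem hw), Equiv.Perm.coe_inv,
      Equiv.symm_apply_apply, toIocMod_zero_of_mem_Icc hp hi]
  · rw [toIocMod_apply_toIocMod_of_mem_AffSym hp hw, Equiv.Perm.coe_inv,
      Equiv.apply_symm_apply, toIocMod_zero_of_mem_Icc hp hi]
  · rw [toIocMod, hf.sub_zsmul_eq]

end Periodicity

section Shift

variable {r : ℕ} {v w : Equiv.Perm ℤ}

@[simp]
theorem rhoP_zpow_apply (a x : ℤ) : (rhoP ^ a) x = x + a := by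
  simp [rhoP]

theorem rhoP_zpow_mem_AffSym (r : ℕ) (a : ℤ) : rhoP ^ a ∈ AffSym r := fun i => by
  simp only [rhoP_zpow_apply]
  ring

theorem mul_shiftIdx (hw : w ∈ AffSym r) :
    r * shiftIdx r w = ∑ i ∈ Finset.Icc (1 : ℤ) r, (w i - i) := by
  refine Int.mul_ediv_cancel' (Int.dvd_of_emod_eq_zero ?_)
  have hmod : Function.Periodic (fun x : ℤ => x % r) r := fun x => Int.add_emod_right x r
  rw [Finset.sum_sub_distrib, ← Int.emod_eq_emod_iff_emod_sub_eq_zero, Finset.sum_int_mod,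
    sum_comp_of_mem_AffSym hw hmod, ← Finset.sum_int_mod]

theorem shiftIdx_mul (hr : 1 ≤ r) (hv : v ∈ AffSym r) (hw : w ∈ AffSym r) :
    shiftIdx r (v * w) = shiftIdx r v + shiftIdx r w := by
  have hper : Function.Periodic (fun i => v i - i) r := fun i => by
    simp only [show v (i + r) = v i + r from hv i]
    ring
  refine mul_left_cancel₀ (Nat.cast_ne_zero.2 (Nat.one_le_iff_ne_zero.1 hr) : (r : ℤ) ≠ 0) ?_
  rw [mul_add, mul_shiftIdx ((AffSym r).mul_mem hv hw), mul_shiftIdx hv, mul_shiftIdx hw,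
    ← sum_comp_of_mem_AffSym hw hper, ← Finset.sum_add_distrib]
  simp

theorem shiftIdx_rhoP_zpow (hr : 1 ≤ r) (a : ℤ) : shiftIdx r (rhoP ^ a) = a := by
  simp [shiftIdx, show r ≠ 0 by omega]

end Shift

section Inversions

/-- The positions `j > i` whose values under `w` are out of order with the value at `i`. -/
def invFrom (w : Equiv.Perm ℤ) (i : ℤ) : Set ℤ := {j | i < j ∧ w j < w i}

/-- The number of inversions of an element of `𝔖_{Δ,r}`, counted modulo simultaneous translation of
both positions by `r`. -/
noncomputable def invCount (r : ℕ) (w : Equiv.Perm ℤ) : ℕ :=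
  ∑ i ∈ Finset.Icc (1 : ℤ) r, (invFrom w i).ncard

variable {r : ℕ} {w d : Equiv.Perm ℤ}

theorem invFrom_finite (hr : 1 ≤ r) (hw : w ∈ AffSym r) (i : ℤ) : (invFrom w i).Finite := by
  have hper : Function.Periodic (fun x => x - w x) r := fun x => by
    simp only [show w (x + r) = w x + r from hw x]
    ring
  obtain ⟨C, hC⟩ := (finite_range_of_periodic (by exact_mod_cast hr) hper).bddAbove
  refine (Set.finite_Icc i (w i + C)).subset fun j hj => ⟨hj.1.le, ?_⟩
  have hjC : j - w j ≤ C := hC ⟨j, rfl⟩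
  have hlt : w j < w i := hj.2
  linarith

theorem invFrom_add_period (hw : w ∈ AffSym r) (i : ℤ) :
    invFrom w (i + r) = (· + (r : ℤ)) '' invFrom w i := by
  ext j
  have hj : w (j - r) = w j - r := by
    rw [eq_sub_iff_add_eq, ← hw (j - r), sub_add_cancel]
  simp only [invFrom, Set.image_add_right, Set.mem_preimage, Set.mem_ofPred_eq, ← sub_eq_add_neg,
    show w (i + r) = w i + r from hw i, hj, lt_sub_iff_add_lt, sub_lt_iff_lt_add]

theorem invFrom_mul (hnc : ∀ a b, a < b → d b < d a → w (d b) < w (d a)) (i : ℤ) :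
    invFrom (w * d) i = ⇑d⁻¹ '' invFrom w (d i) ∪ invFrom d i := by
  ext j
  simp only [Equiv.Perm.coe_inv, Equiv.image_symm_eq_preimage, invFrom, Set.mem_union,
    Set.mem_preimage, Set.mem_ofPred_eq, Equiv.Perm.mul_apply]
  constructor
  · rintro ⟨hij, hw⟩
    obtain h | h := (d.injective.ne hij.ne).lt_or_gt
    · exact Or.inl ⟨h, hw⟩
    · exact Or.inr ⟨hij, h⟩
  · rintro (⟨hd, hw⟩ | ⟨hij, hd⟩)
    · refine ⟨lt_of_not_ge fun hji => ?_, hw⟩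
      have hne : j ≠ i := fun h => hd.ne (by rw [h])
      exact (hnc j i (hji.lt_of_ne hne) hd).asymm hw
    · exact ⟨hij, hnc i j hij hd⟩

theorem invCount_mul (hw : w ∈ AffSym r) (hd : d ∈ AffSym r)
    (hnc : ∀ a b, a < b → d b < d a → w (d b) < w (d a)) :
    invCount r (w * d) = invCount r w + invCount r d := by
  have hper : Function.Periodic (fun i => (invFrom w i).ncard) r := fun i => by
    simp only [invFrom_add_period hw, Set.ncard_image_of_injective _ (add_left_injective (r : ℤ))]
  simp only [invCount]
  rw [← sum_comp_of_mem_AffSym hd hper, ← Finset.sum_add_distrib]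
  refine Finset.sum_congr rfl fun i hi => ?_
  have hr : 1 ≤ r := by
    have := Finset.mem_Icc.1 hi
    omega
  have hdisj : Disjoint (⇑d⁻¹ '' invFrom w (d i)) (invFrom d i) := by
    rw [Set.disjoint_left]
    rintro _ ⟨x, ⟨hx, -⟩, rfl⟩ ⟨-, hlt⟩
    rw [Equiv.Perm.coe_inv, Equiv.apply_symm_apply] at hlt
    exact hlt.asymm hx
  rw [invFrom_mul hnc, Set.ncard_union_eq hdisj ((invFrom_finite hr hw _).image _)
    (invFrom_finite hr hd _), Set.ncard_image_of_injective _ (d⁻¹).injective]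

theorem invCount_one (r : ℕ) : invCount r 1 = 0 := by
  have hempty : ∀ i, invFrom 1 i = ∅ := fun i =>
    Set.eq_empty_of_forall_notMem fun _ hj => hj.1.asymm hj.2
  simp [invCount, hempty]

theorem invCount_rhoP_zpow_mul (r : ℕ) (a : ℤ) (w : Equiv.Perm ℤ) :
    invCount r (rhoP ^ a * w) = invCount r w := by
  simp [invCount, invFrom]

end Inversions

section SimpleReflections

/-- The Coxeter generator `s_i`, for an arbitrary index `i ∈ ℤ` read modulo `r`. -/
noncomputable abbrev simpleRefl (r : ℕ) (i : ℤ) : Equiv.Perm ℤ := tPerm r i (i + 1)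

variable {r : ℕ} {d : Equiv.Perm ℤ}

theorem tPerm_mul_self (r : ℕ) (i j : ℤ) : tPerm r i j * tPerm r i j = 1 := by
  unfold tPerm
  split_ifs with h
  · exact one_mul 1
  · exact Equiv.ext (tFun_invol r i j h)

theorem tPerm_inv (r : ℕ) (i j : ℤ) : (tPerm r i j)⁻¹ = tPerm r i j :=
  inv_eq_of_mul_eq_one_left (tPerm_mul_self r i j)

theorem tPerm_mem_AffSym (r : ℕ) (i j : ℤ) : tPerm r i j ∈ AffSym r := by
  unfold tPerm
  split_ifs with h
  · exact (AffSym r).one_mem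
  · intro k
    simp only [Function.Involutive.coe_toPerm, tFun, add_sub_right_comm k (r : ℤ),
      dvd_add_self_right]
    split_ifs <;> ring

theorem simpleRefl_eq_one (i : ℤ) : simpleRefl 1 i = 1 :=
  dif_pos (by simp)

theorem not_dvd_one (hr : 2 ≤ r) : ¬ (r : ℤ) ∣ 1 := by
  rw [Int.natCast_dvd, Int.natAbs_one, Nat.dvd_one]
  omega

theorem simpleRefl_apply (hr : 2 ≤ r) (i k : ℤ) :
    simpleRefl r i k = if (r : ℤ) ∣ k - i then k + 1
      else if (r : ℤ) ∣ k - (i + 1) then k - 1 else k := by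
  have h : ¬ (r : ℤ) ∣ i + 1 - i := by
    rw [add_sub_cancel_left]
    exact not_dvd_one hr
  simp only [simpleRefl, tPerm, dif_neg h, Function.Involutive.coe_toPerm, tFun]
  split_ifs <;> ring

theorem simpleRefl_apply_self (hr : 2 ≤ r) (i : ℤ) : simpleRefl r i i = i + 1 := by
  simp [simpleRefl_apply hr]

theorem simpleRefl_apply_succ (hr : 2 ≤ r) (i : ℤ) : simpleRefl r i (i + 1) = i := by
  simp [simpleRefl_apply hr, not_dvd_one hr]

theorem mem_invFrom_simpleRefl (hr : 2 ≤ r) {i x y : ℤ} :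
    y ∈ invFrom (simpleRefl r i) x ↔ (r : ℤ) ∣ x - i ∧ y = x + 1 := by
  have hconsec : ∀ a : ℤ, (r : ℤ) ∣ a → ¬ (r : ℤ) ∣ a + 1 := fun a ha ha' =>
    not_dvd_one hr ((Int.dvd_add_right ha).1 ha')
  constructor
  · rintro ⟨hxy, h⟩
    rw [simpleRefl_apply hr, simpleRefl_apply hr] at h
    split_ifs at h <;> omega
  · rintro ⟨hx, rfl⟩
    refine ⟨lt_add_one x, ?_⟩
    rw [simpleRefl_apply hr, simpleRefl_apply hr, if_pos hx, if_neg, if_pos] <;> grind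

theorem invCount_simpleRefl (hr : 2 ≤ r) (i : ℤ) : invCount r (simpleRefl r i) = 1 := by
  have hp : 0 < (r : ℤ) := by omega
  have hcard : ∀ x, (invFrom (simpleRefl r i) x).ncard = if (r : ℤ) ∣ x - i then 1 else 0 := by
    intro x
    split_ifs with h
    · rw [Set.ncard_eq_one]
      exact ⟨x + 1, Set.ext fun y => by simp [mem_invFrom_simpleRefl hr, h]⟩
    · rw [Set.eq_empty_of_forall_notMem (s := invFrom _ x), Set.ncard_empty]
      exact fun y hy => h ((mem_invFrom_simpleRefl hr).1 hy).1
  have hiff : ∀ x ∈ Finset.Icc (1 : ℤ) r, (r : ℤ) ∣ x - i ↔ x = toIocMod hp 0 i := by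
    intro x hx
    rw [eq_comm, toIocMod_eq_iff, zero_add]
    simp only [Set.mem_Ioc, smul_eq_mul]
    have := Finset.mem_Icc.1 hx
    constructor
    · rintro ⟨m, hm⟩
      exact ⟨this, -m, by linarith⟩
    · rintro ⟨-, m, hm⟩
      exact ⟨-m, by linarith⟩
  simp only [invCount, hcard]
  rw [Finset.sum_congr rfl fun x hx => if_congr (hiff x hx) rfl rfl, Finset.sum_ite_eq',
    if_pos (toIocMod_zero_mem_Icc hp i)]

theorem apply_lt_apply_succ_of_dvd_sub (hd : d ∈ AffSym r) {i x : ℤ} (h : (r : ℤ) ∣ x - i)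
    (hi : d i < d (i + 1)) : d x < d (x + 1) := by
  obtain ⟨m, hm⟩ := h
  obtain rfl : x = i + r * m := by linarith
  rw [add_right_comm, apply_add_mul_of_mem_AffSym hd, apply_add_mul_of_mem_AffSym hd]
  linarith

theorem invCount_simpleRefl_mul_of_lt (hr : 2 ≤ r) (hd : d ∈ AffSym r) {i : ℤ}
    (h : d⁻¹ i < d⁻¹ (i + 1)) : invCount r (simpleRefl r i * d) = invCount r d + 1 := by
  rw [invCount_mul (tPerm_mem_AffSym r _ _) hd, invCount_simpleRefl hr, add_comm]
  intro a b hab hba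
  by_contra hcon
  have hne : simpleRefl r i (d a) ≠ simpleRefl r i (d b) :=
    (simpleRefl r i).injective.ne (d.injective.ne hab.ne)
  obtain ⟨hdvd, hsucc⟩ := (mem_invFrom_simpleRefl hr).1 ⟨hba, (not_lt.1 hcon).lt_of_ne hne⟩
  have hlt := apply_lt_apply_succ_of_dvd_sub ((AffSym r).inv_mem hd) hdvd h
  simp only [← hsucc, Equiv.Perm.coe_inv, Equiv.symm_apply_apply] at hlt
  exact hlt.asymm hab

theorem invCount_simpleRefl_mul_of_gt (hr : 2 ≤ r) (hd : d ∈ AffSym r) {i : ℤ}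
    (h : d⁻¹ (i + 1) < d⁻¹ i) : invCount r (simpleRefl r i * d) + 1 = invCount r d := by
  rw [← invCount_simpleRefl_mul_of_lt hr ((AffSym r).mul_mem (tPerm_mem_AffSym r i (i + 1)) hd)
    (i := i), ← mul_assoc, tPerm_mul_self, one_mul]
  rwa [mul_inv_rev, tPerm_inv, Equiv.Perm.mul_apply, Equiv.Perm.mul_apply,
    simpleRefl_apply_self hr, simpleRefl_apply_succ hr]

theorem two_le_of_apply_succ_lt (hr : 1 ≤ r) (hd : d ∈ AffSym r) {i : ℤ}
    (h : d (i + 1) < d i) : 2 ≤ r := by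
  refine hr.lt_of_ne fun h1 => ?_
  subst h1
  have := hd i
  push_cast at this
  omega

theorem shiftIdx_simpleRefl (hr : 1 ≤ r) (i : ℤ) : shiftIdx r (simpleRefl r i) = 0 := by
  have hs : simpleRefl r i ∈ AffSym r := tPerm_mem_AffSym r i (i + 1)
  have h := shiftIdx_mul hr hs hs
  rw [tPerm_mul_self, ← zpow_zero rhoP, shiftIdx_rhoP_zpow hr] at h
  omega

end SimpleReflections

section Length

variable {r : ℕ} {w x : Equiv.Perm ℤ}

theorem eq_rhoP_zpow_of_strictMono (hw : StrictMono w) : w = rhoP ^ w 0 := by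
  have hsucc : ∀ i, w (i + 1) = w i + 1 :=
    OrderIso.map_succ (hw.orderIsoOfSurjective w w.surjective)
  ext i
  simpa [add_comm] using map_add_mul_of_map_add hsucc 0 i

theorem exists_descent (hr : 1 ≤ r) (hx : x ∈ AffSym r) (h0 : shiftIdx r x = 0) (h1 : x ≠ 1) :
    ∃ i, 1 ≤ i ∧ i ≤ (r : ℤ) ∧ x⁻¹ (i + 1) < x⁻¹ i := by
  by_contra! hasc
  have hp : 0 < (r : ℤ) := by exact_mod_cast hr
  have hmono : StrictMono ⇑x⁻¹ := strictMono_int_of_lt_succ fun i => by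
    obtain ⟨hle, hge⟩ := Finset.mem_Icc.1 (toIocMod_zero_mem_Icc hp i)
    refine apply_lt_apply_succ_of_dvd_sub ((AffSym r).inv_mem hx) ?_
      ((hasc _ hle hge).lt_of_ne ((x⁻¹).injective.ne (by simp)))
    simp [toIocMod]
  have hpow := eq_rhoP_zpow_of_strictMono hmono
  rw [inv_eq_iff_eq_inv, ← zpow_neg] at hpow
  rw [hpow, shiftIdx_rhoP_zpow hr] at h0
  exact h1 (by rw [hpow, h0, zpow_zero])

theorem exists_word (hr : 1 ≤ r) (hx : x ∈ AffSym r) (h0 : shiftIdx r x = 0) :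
    ∃ l : List (Equiv.Perm ℤ), l.length = invCount r x ∧ (∀ s ∈ l, s ∈ sGen r) ∧ l.prod = x := by
  induction hm : invCount r x generalizing x with
  | zero =>
    obtain rfl | h1 := eq_or_ne x 1
    · exact ⟨[], by simp⟩
    · obtain ⟨i, -, -, hi⟩ := exists_descent hr hx h0 h1
      have := invCount_simpleRefl_mul_of_gt
        (two_le_of_apply_succ_lt hr ((AffSym r).inv_mem hx) hi) hx hi
      omega
  | succ m ih =>
    have h1 : x ≠ 1 := by
      rintro rfl
      simp [invCount_one] at hm
    obtain ⟨i, hi1, hir, hi⟩ := exists_descent hr hx h0 h1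
    have hs : simpleRefl r i ∈ AffSym r := tPerm_mem_AffSym r i (i + 1)
    have hcount := invCount_simpleRefl_mul_of_gt
      (two_le_of_apply_succ_lt hr ((AffSym r).inv_mem hx) hi) hx hi
    obtain ⟨l, hlen, hmem, hprod⟩ := ih ((AffSym r).mul_mem hs hx)
      (by rw [shiftIdx_mul hr hs hx, shiftIdx_simpleRefl hr, h0, add_zero]) (by omega)
    refine ⟨simpleRefl r i :: l, by simp [hlen],
      List.forall_mem_cons.2 ⟨⟨i, hi1, hir, rfl⟩, hmem⟩, ?_⟩
    rw [List.prod_cons, hprod, ← mul_assoc, tPerm_mul_self, one_mul]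

theorem sGen_subset_AffSym (r : ℕ) : sGen r ⊆ AffSym r := by
  rintro _ ⟨i, -, -, rfl⟩
  exact tPerm_mem_AffSym r i (i + 1)

theorem invCount_simpleRefl_mul_le (hr : 1 ≤ r) (hx : x ∈ AffSym r) (i : ℤ) :
    invCount r (simpleRefl r i * x) ≤ invCount r x + 1 := by
  obtain rfl | hr2 := hr.eq_or_lt
  · rw [simpleRefl_eq_one, one_mul]
    exact Nat.le_succ _
  obtain h | h := ((x⁻¹).injective.ne (lt_add_one i).ne).lt_or_gt
  · exact (invCount_simpleRefl_mul_of_lt hr2 hx h).le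
  · have := invCount_simpleRefl_mul_of_gt hr2 hx h
    omega

theorem invCount_prod_le_length (hr : 1 ≤ r) {l : List (Equiv.Perm ℤ)}
    (hl : ∀ s ∈ l, s ∈ sGen r) : invCount r l.prod ≤ l.length := by
  induction l with
  | nil => simp [invCount_one]
  | cons s l ih =>
    obtain ⟨⟨i, -, -, rfl⟩, htail⟩ := List.forall_mem_cons.1 hl
    have hprod : l.prod ∈ AffSym r :=
      (AffSym r).list_prod_mem fun s hs => sGen_subset_AffSym r (htail s hs)
    rw [List.prod_cons, List.length_cons]
    exact (invCount_simpleRefl_mul_le hr hprod i).trans (Nat.succ_le_succ (ih htail))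

theorem lenW_eq_invCount (hr : 1 ≤ r) (hx : x ∈ AffSym r) (h0 : shiftIdx r x = 0) :
    lenW r x = invCount r x := by
  have hword := exists_word hr hx h0
  refine le_antisymm (Nat.sInf_le hword) (le_csInf ⟨_, hword⟩ ?_)
  rintro _ ⟨l, rfl, hl, rfl⟩
  exact invCount_prod_le_length hr hl

theorem alen_eq_invCount (hr : 1 ≤ r) (hw : w ∈ AffSym r) : alen r w = invCount r w := by
  have hrho := rhoP_zpow_mem_AffSym r (-shiftIdx r w)
  rw [alen, ← zpow_neg, lenW_eq_invCount hr ((AffSym r).mul_mem hrho hw), invCount_rhoP_zpow_mul]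
  rw [shiftIdx_mul hr hrho hw, shiftIdx_rhoP_zpow hr, neg_add_cancel]

end Length

section Blocks

theorem ncard_Ioc (a b : ℤ) : (Set.Ioc a b).ncard = (b - a).toNat := by
  rw [← Finset.coe_Ioc, Set.ncard_coe_finset, Int.card_Ioc]

variable {n r : ℕ} {lam : ℤ → ℕ}

theorem periodic_of_mem_LambdaSet (hl : lam ∈ LambdaSet n r) : Function.Periodic lam n :=
  fun i => by rw [hl.1, add_sub_cancel_right]

theorem bnd_sub_one (hn : 1 ≤ n) (hl : lam ∈ LambdaSet n r) (m : ℤ) :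
    bnd n r lam (m - 1) =
      (m - 1) / n * r + ∑ t ∈ Finset.Icc (1 : ℤ) ((m - 1) % n), (lam t : ℤ) := by
  have hn0 : (0 : ℤ) < n := by omega
  have hsum : ∑ t ∈ Finset.Icc (1 : ℤ) n, (lam t : ℤ) = r := by exact_mod_cast hl.2
  have hdiv := Int.emod_add_mul_ediv (m - 1) n
  have hlt := Int.emod_lt_of_pos (m - 1) hn0
  unfold bnd
  obtain h0 | hpos := (Int.emod_nonneg (m - 1) hn0.ne').eq_or_lt
  · obtain ⟨hq, ht⟩ : (m - 1 - 1) / n = (m - 1) / n - 1 ∧ (m - 1 - 1) % n = n - 1 :=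
      (Int.ediv_emod_unique hn0).2 ⟨by linarith, by omega, by omega⟩
    rw [hq, ht, ← h0, sub_add_cancel, hsum, Finset.Icc_eq_empty (by norm_num), Finset.sum_empty]
    ring
  · obtain ⟨hq, ht⟩ : (m - 1 - 1) / n = (m - 1) / n ∧ (m - 1 - 1) % n = (m - 1) % n - 1 :=
      (Int.ediv_emod_unique hn0).2 ⟨by linarith, by omega, by omega⟩
    rw [hq, ht, sub_add_cancel]

theorem bnd_eq_bnd_sub_one_add (hn : 1 ≤ n) (hl : lam ∈ LambdaSet n r) (m : ℤ) :
    bnd n r lam m = bnd n r lam (m - 1) + lam m := by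
  have h0 := Int.emod_nonneg (m - 1) (b := n) (by omega)
  have hlam : lam ((m - 1) % n + 1) = lam m := by
    rw [Int.emod_def, mul_comm,
      ← (periodic_of_mem_LambdaSet hl).sub_int_mul_eq ((m - 1) / n) (x := m)]
    exact congrArg lam (by push_cast; ring)
  rw [bnd_sub_one hn hl, bnd, ← Finset.insert_Icc_right_eq_Icc_add_one (by omega),
    Finset.sum_insert (by simp), hlam]
  ring

theorem bnd_zero (hn : 1 ≤ n) (hl : lam ∈ LambdaSet n r) : bnd n r lam 0 = 0 := by
  simpa using bnd_sub_one hn hl 1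

theorem bnd_add_period (hn : 1 ≤ n) (m : ℤ) : bnd n r lam (m + n) = bnd n r lam m + r := by
  have hn0 : (n : ℤ) ≠ 0 := by omega
  rw [bnd, bnd, add_sub_right_comm, Int.add_ediv_of_dvd_right dvd_rfl,
    Int.ediv_self hn0, Int.add_emod_right]
  ring

theorem bnd_mul (hn : 1 ≤ n) (hl : lam ∈ LambdaSet n r) (m : ℤ) :
    bnd n r lam (n * m) = r * m := by
  simpa [bnd_zero hn hl] using map_add_mul_of_map_add (bnd_add_period (r := r) (lam := lam) hn) 0 m

theorem bnd_monotone (hn : 1 ≤ n) (hl : lam ∈ LambdaSet n r) : Monotone (bnd n r lam) :=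
  monotone_int_of_le_succ fun m => by
    rw [bnd_eq_bnd_sub_one_add hn hl (m + 1), add_sub_cancel_right]
    omega

theorem Rset_eq_Ioc (hn : 1 ≤ n) (hl : lam ∈ LambdaSet n r) (k : ℤ) :
    Rset n r lam k = Set.Ioc (bnd n r lam (k - 1)) (bnd n r lam k) := by
  rw [bnd_sub_one hn hl]
  rfl

theorem Rset_ncard (hn : 1 ≤ n) (hl : lam ∈ LambdaSet n r) (k : ℤ) :
    (Rset n r lam k).ncard = lam k := by
  rw [Rset_eq_Ioc hn hl, ncard_Ioc, bnd_eq_bnd_sub_one_add hn hl k]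
  omega

theorem Rset_finite (hn : 1 ≤ n) (hl : lam ∈ LambdaSet n r) (k : ℤ) : (Rset n r lam k).Finite := by
  rw [Rset_eq_Ioc hn hl]
  exact Set.finite_Ioc _ _

/-- The index `k` of the block `R^λ_k` containing `x`. -/
noncomputable def blockIdx (n r : ℕ) (lam : ℤ → ℕ) (x : ℤ) : ℤ := sInf {k | x ≤ bnd n r lam k}

theorem gc_blockIdx_bnd (hn : 1 ≤ n) (hr : 1 ≤ r) (hl : lam ∈ LambdaSet n r) :
    GaloisConnection (blockIdx n r lam) (bnd n r lam) := by
  intro x k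
  have : (1 : ℤ) ≤ r := by exact_mod_cast hr
  have hne : {k | x ≤ bnd n r lam k}.Nonempty :=
    ⟨n * |x|, by
      rw [Set.mem_ofPred_eq, bnd_mul hn hl]
      nlinarith [le_abs_self x, abs_nonneg x]⟩
  have hbdd : BddBelow {k | x ≤ bnd n r lam k} := by
    refine ⟨n * (-|x| - 1), fun k hk => le_of_not_gt fun hlt => ?_⟩
    have hle := hk.trans (bnd_monotone hn hl hlt.le)
    rw [bnd_mul hn hl] at hle
    nlinarith [neg_abs_le x, abs_nonneg x]
  exact ⟨fun h => (Int.csInf_mem hne hbdd).trans (bnd_monotone hn hl h), fun h => csInf_le hbdd h⟩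

theorem mem_Rset_iff (hn : 1 ≤ n) (hr : 1 ≤ r) (hl : lam ∈ LambdaSet n r) {x k : ℤ} :
    x ∈ Rset n r lam k ↔ blockIdx n r lam x = k := by
  rw [Rset_eq_Ioc hn hl, Set.mem_Ioc, ← not_le, ← gc_blockIdx_bnd hn hr hl x (k - 1),
    ← gc_blockIdx_bnd hn hr hl x k]
  omega

theorem blockIdx_add_period (hn : 1 ≤ n) (hr : 1 ≤ r) (hl : lam ∈ LambdaSet n r) (x : ℤ) :
    blockIdx n r lam (x + r) = blockIdx n r lam x + n := by
  refine eq_of_forall_ge_iff fun k => ?_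
  have hb := bnd_add_period (r := r) (lam := lam) hn (k - n)
  rw [sub_add_cancel] at hb
  rw [gc_blockIdx_bnd hn hr hl (x + r) k, hb, add_le_add_iff_right, ← gc_blockIdx_bnd hn hr hl x,
    le_sub_iff_add_le]

theorem blockIdx_add_mul (hn : 1 ≤ n) (hr : 1 ≤ r) (hl : lam ∈ LambdaSet n r) (x m : ℤ) :
    blockIdx n r lam (x + r * m) = blockIdx n r lam x + n * m :=
  map_add_mul_of_map_add (blockIdx_add_period hn hr hl) x m

theorem mem_Icc_of_mem_Rset (hn : 1 ≤ n) (hl : lam ∈ LambdaSet n r) {x k : ℤ}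
    (hk : k ∈ Finset.Icc (1 : ℤ) n) (hx : x ∈ Rset n r lam k) : x ∈ Finset.Icc (1 : ℤ) r := by
  rw [Finset.mem_Icc] at hk ⊢
  rw [Rset_eq_Ioc hn hl, Set.mem_Ioc] at hx
  have h0 := bnd_monotone hn hl (show 0 ≤ k - 1 by omega)
  have h1 := bnd_monotone hn hl hk.2
  have h2 := bnd_mul hn hl 1
  rw [bnd_zero hn hl] at h0
  rw [mul_one, mul_one] at h2
  omega

end Blocks

section DistinguishedRepresentatives

variable {n r : ℕ} {lam mu : ℤ → ℕ} {w d : Equiv.Perm ℤ}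

theorem SymFin_le_AffSym (r : ℕ) : SymFin r ≤ AffSym r := by
  rw [SymFin, Subgroup.closure_le]
  rintro _ ⟨i, -, -, rfl⟩
  exact tPerm_mem_AffSym r i (i + 1)

theorem blockIdx_apply_of_mem_YoungSet (hn : 1 ≤ n) (hr : 1 ≤ r) (hl : lam ∈ LambdaSet n r)
    (hw : w ∈ YoungSet n r lam) (x : ℤ) : blockIdx n r lam (w x) = blockIdx n r lam x := by
  have hp : (0 : ℤ) < n := by omega
  set m := -toIocDiv hp 0 (blockIdx n r lam x)
  have hk : toIocMod hp 0 (blockIdx n r lam x) = blockIdx n r lam x + n * m :=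
    toIocMod_zero_eq_add_mul hp _
  obtain ⟨h1, hle⟩ := Finset.mem_Icc.1 (toIocMod_zero_mem_Icc hp (blockIdx n r lam x))
  have hmem : w (x + r * m) ∈ w '' Rset n r lam (blockIdx n r lam x + n * m) :=
    Set.mem_image_of_mem w ((mem_Rset_iff hn hr hl).2 (blockIdx_add_mul hn hr hl x m))
  rw [← hk, hw.2 _ h1 hle, hk, mem_Rset_iff hn hr hl,
    apply_add_mul_of_mem_AffSym (SymFin_le_AffSym r hw.1), blockIdx_add_mul hn hr hl] at hmem
  exact add_right_cancel hmem

theorem image_Rset_of_blockIdx_apply (hn : 1 ≤ n) (hr : 1 ≤ r) (hl : lam ∈ LambdaSet n r)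
    (hw : ∀ x, blockIdx n r lam (w x) = blockIdx n r lam x) (k : ℤ) :
    w '' Rset n r lam k = Rset n r lam k := by
  ext y
  rw [Equiv.image_eq_preimage_symm, Set.mem_preimage, mem_Rset_iff hn hr hl, mem_Rset_iff hn hr hl,
    ← hw (w.symm y), Equiv.apply_symm_apply]

theorem blockIdx_simpleRefl (hn : 1 ≤ n) (hr : 2 ≤ r) (hl : lam ∈ LambdaSet n r) {i : ℤ}
    (hi : blockIdx n r lam (i + 1) = blockIdx n r lam i) (x : ℤ) :
    blockIdx n r lam (simpleRefl r i x) = blockIdx n r lam x := by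
  have hmul := blockIdx_add_mul hn (one_le_two.trans hr) hl
  rw [simpleRefl_apply hr]
  split_ifs with h h'
  · obtain ⟨q, hq⟩ := h
    obtain rfl : x = i + r * q := by linarith
    rw [add_right_comm, hmul, hmul, hi]
  · obtain ⟨q, hq⟩ := h'
    obtain rfl : x = i + 1 + r * q := by linarith
    rw [add_sub_right_comm, add_sub_cancel_right, hmul, hmul, hi]
  · rfl

theorem simpleRefl_mem_YoungSet (hn : 1 ≤ n) (hl : lam ∈ LambdaSet n r) {i : ℤ} (h1 : 1 ≤ i)
    (hir : i < r) (hi : blockIdx n r lam (i + 1) = blockIdx n r lam i) :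
    simpleRefl r i ∈ YoungSet n r lam :=
  ⟨Subgroup.subset_closure ⟨i, h1, hir, rfl⟩, fun k _ _ =>
    image_Rset_of_blockIdx_apply hn (by omega) hl (blockIdx_simpleRefl hn (by omega) hl hi) k⟩

theorem inv_lt_inv_of_mem_DRep (hn : 1 ≤ n) (hl : lam ∈ LambdaSet n r) (hd : d ∈ DRep n r lam)
    {i : ℤ} (h1 : 1 ≤ i) (hir : i < r) (hi : blockIdx n r lam (i + 1) = blockIdx n r lam i) :
    d⁻¹ i < d⁻¹ (i + 1) := by
  have hr1 : 1 ≤ r := by omega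
  have hr2 : 2 ≤ r := by omega
  have hs : simpleRefl r i ∈ AffSym r := tPerm_mem_AffSym r i (i + 1)
  have hlen := hd.2 _ (simpleRefl_mem_YoungSet hn hl h1 hir hi)
  rw [alen_eq_invCount hr1 ((AffSym r).mul_mem hs hd.1), alen_eq_invCount hr1 hs,
    alen_eq_invCount hr1 hd.1, invCount_simpleRefl hr2] at hlen
  refine ((d⁻¹).injective.ne (lt_add_one i).ne).lt_or_gt.resolve_right fun hgt => ?_
  have := invCount_simpleRefl_mul_of_gt hr2 hd.1 hgt
  omega

theorem inv_lt_inv_succ_of_mem_DRep (hn : 1 ≤ n) (hr : 1 ≤ r) (hl : lam ∈ LambdaSet n r)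
    (hd : d ∈ DRep n r lam) {i : ℤ} (hi : blockIdx n r lam (i + 1) = blockIdx n r lam i) :
    d⁻¹ i < d⁻¹ (i + 1) := by
  have hp : (0 : ℤ) < n := by omega
  have hmul := blockIdx_add_mul hn hr hl
  set m := -toIocDiv hp 0 (blockIdx n r lam i)
  have hk : toIocMod hp 0 (blockIdx n r lam i) = blockIdx n r lam i + n * m :=
    toIocMod_zero_eq_add_mul hp _
  have hsucc : i + r * m + 1 = i + 1 + r * m := add_right_comm _ _ _
  have hmem : i + r * m ∈ Finset.Icc (1 : ℤ) r ∧ i + r * m + 1 ∈ Finset.Icc (1 : ℤ) r := by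
    have hIcc := toIocMod_zero_mem_Icc hp (blockIdx n r lam i)
    constructor <;> refine mem_Icc_of_mem_Rset hn hl hIcc ((mem_Rset_iff hn hr hl).2 ?_)
    · rw [hmul, hk]
    · rw [hsucc, hmul, hk, hi]
  simp only [Finset.mem_Icc] at hmem
  have hlt := inv_lt_inv_of_mem_DRep hn hl hd (i := i + r * m) (by omega) (by omega)
    (by rw [hsucc, hmul, hmul, hi])
  exact apply_lt_apply_succ_of_dvd_sub ((AffSym r).inv_mem hd.1) ⟨-m, by ring⟩ hlt

theorem mem_DRep_iff (hn : 1 ≤ n) (hr : 1 ≤ r) (hl : lam ∈ LambdaSet n r) :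
    d ∈ DRep n r lam ↔ d ∈ AffSym r ∧ ∀ k, StrictMonoOn ⇑d⁻¹ (Rset n r lam k) := by
  constructor
  · refine fun hd => ⟨hd.1, fun k => ?_⟩
    have hconn : (Rset n r lam k).OrdConnected := by
      rw [Rset_eq_Ioc hn hl]
      exact Set.ordConnected_Ioc
    refine strictMonoOn_of_lt_succ hconn fun i _ hi hi' => ?_
    rw [Order.succ_eq_add_one] at hi' ⊢
    rw [mem_Rset_iff hn hr hl] at hi hi'
    exact inv_lt_inv_succ_of_mem_DRep hn hr hl hd (hi'.trans hi.symm)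
  · rintro ⟨hd, hmono⟩
    refine ⟨hd, fun w hw => ?_⟩
    have hwA := SymFin_le_AffSym r hw.1
    rw [alen_eq_invCount hr ((AffSym r).mul_mem hwA hd), alen_eq_invCount hr hwA,
      alen_eq_invCount hr hd]
    -- A pair inverted by both factors would lie in one block, where `d⁻¹` is increasing.
    refine invCount_mul hwA hd fun a b hab hba => lt_of_not_ge fun hle => ?_
    have hgc := (gc_blockIdx_bnd hn hr hl).monotone_l
    have hblock : blockIdx n r lam (d a) = blockIdx n r lam (d b) := by
      refine le_antisymm ?_ (hgc hba.le)
      rw [← blockIdx_apply_of_mem_YoungSet hn hr hl hw (d a),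
        ← blockIdx_apply_of_mem_YoungSet hn hr hl hw (d b)]
      exact hgc hle
    have hlt := hmono _ ((mem_Rset_iff hn hr hl).2 rfl) ((mem_Rset_iff hn hr hl).2 hblock) hba
    simp only [Equiv.Perm.coe_inv, Equiv.symm_apply_apply] at hlt
    exact hlt.asymm hab

theorem mem_DRep2_iff (hn : 1 ≤ n) (hr : 1 ≤ r) (hl : lam ∈ LambdaSet n r)
    (hm : mu ∈ LambdaSet n r) :
    d ∈ DRep2 n r lam mu ↔ d ∈ AffSym r ∧ (∀ k, StrictMonoOn ⇑d⁻¹ (Rset n r lam k)) ∧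
      ∀ l, StrictMonoOn ⇑d (Rset n r mu l) := by
  simp only [DRep2, Set.mem_ofPred_eq, mem_DRep_iff hn hr hl, mem_DRep_iff hn hr hm,
    (AffSym r).inv_mem_iff, inv_inv]
  tauto

end DistinguishedRepresentatives

section IntegerIntervals

variable {p q m : ℤ}

theorem eq_Ioc_ncard_of_lower {S : Set ℤ} (hS : S ⊆ Set.Ioc p q)
    (hlower : ∀ x ∈ S, Set.Ioc p x ⊆ S) : S = Set.Ioc p (p + S.ncard) := by
  obtain rfl | hne := S.eq_empty_or_nonempty
  · simp
  obtain ⟨x, hx, hmax⟩ := Set.exists_max_image S id ((Set.finite_Ioc p q).subset hS) hne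
  have hSx : S = Set.Ioc p x := subset_antisymm (fun y hy => ⟨(hS hy).1, hmax y hy⟩) (hlower x hx)
  have hpx : p < x := (hS hx).1
  conv_rhs => rw [hSx, ncard_Ioc]
  rw [hSx]
  congr 1
  omega

theorem apply_eq_add_of_strictMonoOn_Ioc {f : ℤ → ℤ} {p' q' x : ℤ}
    (hf : StrictMonoOn f (Set.Ioc p q)) (himg : f '' Set.Ioc p q = Set.Ioc p' q')
    (hx : x ∈ Set.Ioc p q) : f x = p' + (x - p) := by
  have hsub : Set.Ioc p x ⊆ Set.Ioc p q := Set.Ioc_subset_Ioc_right hx.2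
  have hcard : (f '' Set.Ioc p x).ncard = (x - p).toNat := by
    rw [(hf.injOn.mono hsub).ncard_image, ncard_Ioc]
  have hIoc := eq_Ioc_ncard_of_lower (himg ▸ Set.image_mono hsub) (by
    rintro _ ⟨y, hy, rfl⟩ z hz
    have hfy : f y ∈ Set.Ioc p' q' := himg ▸ Set.mem_image_of_mem f (hsub hy)
    obtain ⟨t, ht, rfl⟩ : z ∈ f '' Set.Ioc p q := himg ▸ ⟨hz.1, hz.2.trans hfy.2⟩
    exact ⟨t, ⟨ht.1, ((hf.le_iff_le ht (hsub hy)).1 hz.2).trans hy.2⟩, rfl⟩)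
  have hpx : p < x := hx.1
  rw [hcard, Int.toNat_of_nonneg (sub_nonneg.2 hpx.le)] at hIoc
  have hle : f x ∈ Set.Ioc p' (p' + (x - p)) :=
    hIoc ▸ Set.mem_image_of_mem f (Set.right_mem_Ioc.2 hpx)
  obtain ⟨y, hy, hfy⟩ : p' + (x - p) ∈ f '' Set.Ioc p x :=
    hIoc ▸ Set.right_mem_Ioc.2 (by omega)
  exact le_antisymm hle.2 (hfy ▸ (hf.le_iff_le (hsub hy) hx).2 hy.2)

end IntegerIntervals

section PartialSums

/-- The sum of the terms of `a` with index at most `l`. -/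
noncomputable def partialSum (a : ℤ → ℕ) (l : ℤ) : ℕ := ∑ᶠ t ∈ Set.Iic l, a t

variable {a : ℤ → ℕ}

theorem partialSum_eq_add (ha : a.support.Finite) (l : ℤ) :
    partialSum a l = partialSum a (l - 1) + a l := by
  have hIic : Set.Iic l = insert l (Set.Iic (l - 1)) := by
    ext t
    simp only [Set.mem_Iic, Set.mem_insert_iff]
    omega
  rw [partialSum, hIic, finsum_mem_insert' _ (by simp) (ha.inter_of_right _), add_comm, partialSum]

theorem partialSum_monotone (ha : a.support.Finite) : Monotone (partialSum a) :=
  monotone_int_of_le_succ fun l => by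
    rw [partialSum_eq_add ha (l + 1), add_sub_cancel_right]
    exact Nat.le_add_right _ _

theorem exists_partialSum_eq_zero (ha : a.support.Finite) : ∃ m, partialSum a m = 0 := by
  obtain ⟨b, hb⟩ := ha.bddBelow
  refine ⟨b - 1, finsum_mem_eq_zero_of_forall_eq_zero fun t ht => ?_⟩
  by_contra hne
  have hbt : b ≤ t := hb hne
  have htb : t ≤ b - 1 := ht
  omega

theorem exists_le_partialSum_eq_finsum (ha : a.support.Finite) (l : ℤ) :
    ∃ m, l ≤ m ∧ partialSum a m = ∑ᶠ t, a t := by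
  obtain ⟨b, hb⟩ := ha.bddAbove
  refine ⟨max l b, le_max_left l b, ?_⟩
  rw [partialSum, ← finsum_mem_univ a]
  refine finsum_mem_inter_support_eq' a _ _ fun t ht => ?_
  simp only [Set.mem_Iic, Set.mem_univ, iff_true]
  exact (hb ht).trans (le_max_right l b)

theorem partialSum_le_finsum (ha : a.support.Finite) (l : ℤ) : partialSum a l ≤ ∑ᶠ t, a t := by
  obtain ⟨m, hlm, hm⟩ := exists_le_partialSum_eq_finsum ha l
  exact hm ▸ partialSum_monotone ha hlm

theorem exists_partialSum_lt_le (ha : a.support.Finite) {y : ℤ} (hy : 0 < y)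
    (hya : y ≤ (∑ᶠ t, a t : ℕ)) : ∃ l, (partialSum a (l - 1) : ℤ) < y ∧ y ≤ partialSum a l := by
  obtain ⟨b, hb⟩ := exists_partialSum_eq_zero ha
  obtain ⟨t, -, ht⟩ := exists_le_partialSum_eq_finsum ha 0
  obtain ⟨l, hl, hleast⟩ := Int.exists_least_of_bdd (P := fun l => y ≤ partialSum a l)
    ⟨b, fun l hl => le_of_not_ge fun hlb => by
      have := partialSum_monotone ha hlb
      omega⟩ ⟨t, ht ▸ hya⟩
  exact ⟨l, lt_of_not_ge fun h => by have := hleast _ h; omega, hl⟩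

theorem partialSum_comp_add_right (a : ℤ → ℕ) (c l : ℤ) :
    partialSum a (l + c) = partialSum (fun t => a (t + c)) l := by
  rw [partialSum, partialSum, ← finsum_comp_equiv (Equiv.addRight c)]
  simp only [Equiv.coe_addRight, Set.mem_Iic, add_le_add_iff_right]

theorem finsum_mem_ncard_fiber {α ι : Type*} {S : Set α} (hS : S.Finite) (h : α → ι) (T : Set ι) :
    ∑ᶠ l ∈ T, (S ∩ h ⁻¹' {l}).ncard = (S ∩ h ⁻¹' T).ncard := by
  lift S to Finset α using hS
  have hcoe : ∀ U : Set ι, (S : Set α) ∩ h ⁻¹' U = ↑(S.filter fun x => h x ∈ U) := fun U => by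
    ext x
    simp
  simp only [hcoe, Set.ncard_coe_finset, Set.mem_singleton_iff]
  rw [Finset.card_eq_sum_card_fiberwise (f := h) (t := (S.image h).filter (· ∈ T))]
  · rw [finsum_mem_eq_sum_of_inter_support_eq (t := (S.image h).filter (· ∈ T))]
    · refine Finset.sum_congr rfl fun l hl => congrArg Finset.card ?_
      ext x
      simp only [Finset.mem_filter] at hl ⊢
      grind
    · ext l
      simp only [Set.mem_inter_iff, Function.mem_support, Finset.coe_filter, Set.mem_ofPred_eq,
        Finset.mem_image, Finset.card_ne_zero, Finset.filter_nonempty_iff]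
      grind
  · intro x hx
    simp only [Finset.mem_coe, Finset.mem_filter, Finset.mem_image] at hx ⊢
    exact ⟨⟨x, hx.1, rfl⟩, hx.2⟩

theorem partialSum_ncard_fiber {α : Type*} {S : Set α} (hS : S.Finite) (h : α → ℤ) (l : ℤ) :
    partialSum (fun t => (S ∩ h ⁻¹' {t}).ncard) l = (S ∩ h ⁻¹' Set.Iic l).ncard :=
  finsum_mem_ncard_fiber hS h (Set.Iic l)

theorem support_ncard_fiber_finite {α ι : Type*} {S : Set α} (hS : S.Finite) (h : α → ι) :
    (Function.support fun l => (S ∩ h ⁻¹' {l}).ncard).Finite := by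
  refine (hS.image h).subset fun l hl => ?_
  obtain ⟨x, hx, rfl⟩ := Set.nonempty_of_ncard_ne_zero hl
  exact Set.mem_image_of_mem h hx

theorem Ioc_inter_fiber_of_monotoneOn {p q : ℤ} {h : ℤ → ℤ} (hh : MonotoneOn h (Set.Ioc p q))
    {a : ℤ → ℕ} (ha : ∀ l, a l = (Set.Ioc p q ∩ h ⁻¹' {l}).ncard) (l : ℤ) :
    Set.Ioc p q ∩ h ⁻¹' {l} = Set.Ioc (p + partialSum a (l - 1)) (p + partialSum a l) := by
  have hlower : ∀ t, Set.Ioc p q ∩ h ⁻¹' Set.Iic t = Set.Ioc p (p + partialSum a t) := fun t => by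
    rw [funext ha, partialSum_ncard_fiber (Set.finite_Ioc p q)]
    refine eq_Ioc_ncard_of_lower Set.inter_subset_left fun x hx y hy => ?_
    have hyq : y ∈ Set.Ioc p q := ⟨hy.1, hy.2.trans hx.1.2⟩
    exact ⟨hyq, (hh hyq hx.1 hy.2).trans hx.2⟩
  have hfiber : h ⁻¹' {l} = h ⁻¹' Set.Iic l \ h ⁻¹' Set.Iic (l - 1) := by
    ext x
    simp only [Set.mem_preimage, Set.mem_singleton_iff, Set.mem_sdiff, Set.mem_Iic]
    omega
  rw [hfiber, Set.inter_sdiff_distrib_left, hlower, hlower]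
  ext x
  simp only [Set.mem_sdiff, Set.mem_Ioc]
  omega

end PartialSums

section PeriodicMatrices

variable {n r : ℕ} {A : ℤ → ℤ → ℕ}

/-- `Θ_Δ(n,r)`: the matrices of `Θ_Δ(n)` of total weight `r`. -/
def ThetaSigma (n r : ℕ) : Set (ℤ → ℤ → ℕ) := {A | A ∈ ThetaSet n ∧ sigmaTot n A = r}

/-- Writing an integer as `i + p * m` with `1 ≤ i ≤ p`. -/
noncomputable def periodEquiv {p : ℤ} (hp : 0 < p) : ℤ ≃ Finset.Icc (1 : ℤ) p × ℤ where
  toFun x := (⟨toIocMod hp 0 x, toIocMod_zero_mem_Icc hp x⟩, toIocDiv hp 0 x)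
  invFun y := y.1 + p * y.2
  left_inv x := by
    simpa only [smul_eq_mul, mul_comm] using toIocMod_add_toIocDiv_zsmul hp 0 x
  right_inv y := by
    have hy : (y.1 : ℤ) ∈ Set.Ioc 0 (0 + p) := by
      rw [zero_add]
      exact Finset.mem_Icc.1 y.1.2
    ext
    · simp only [mul_comm p, ← smul_eq_mul, toIocMod_add_zsmul]
      exact toIocMod_zero_of_mem_Icc hp y.1.2
    · simp only [mul_comm p, ← smul_eq_mul, toIocDiv_add_zsmul]
      rw [toIocDiv_eq_of_sub_zsmul_mem_Ioc hp (n := 0) (by simpa using hy), zero_add]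

theorem finsum_eq_sum_finsum_period {M : Type*} [AddCommMonoid M] {p : ℤ} (hp : 0 < p) {f : ℤ → M}
    (hf : f.support.Finite) :
    ∑ᶠ x, f x = ∑ i ∈ Finset.Icc (1 : ℤ) p, ∑ᶠ m : ℤ, f (i + p * m) := by
  rw [← finsum_comp_equiv (periodEquiv hp).symm, finsum_curry, finsum_eq_sum_of_fintype]
  · exact Finset.sum_coe_sort (Finset.Icc (1 : ℤ) p) fun i => ∑ᶠ m : ℤ, f (i + p * m)
  · exact hf.preimage (periodEquiv hp).symm.injective.injOn

theorem apply_add_mul_add_mul_of_mem_ThetaSet (hA : A ∈ ThetaSet n) (i j m : ℤ) :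
    A (i + n * m) (j + n * m) = A i j := by
  have hper : Function.Periodic (fun t : ℤ => A (i + t) (j + t)) n := fun t => by
    simp only [← add_assoc, hA.1]
  simpa [mul_comm] using hper.int_mul_eq m

theorem sum_coM_eq_sum_roM (hn : 1 ≤ n) (hA : A ∈ ThetaSet n) :
    ∑ j ∈ Finset.Icc (1 : ℤ) n, coM A j = ∑ i ∈ Finset.Icc (1 : ℤ) n, roM A i := by
  have hp : (0 : ℤ) < n := by omega
  calc ∑ j ∈ Finset.Icc (1 : ℤ) n, coM A j
      = ∑ j ∈ Finset.Icc (1 : ℤ) n, ∑ i ∈ Finset.Icc (1 : ℤ) n, ∑ᶠ m : ℤ, A (i + n * m) j :=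
        Finset.sum_congr rfl fun j _ => finsum_eq_sum_finsum_period hp (hA.2.2 j)
    _ = ∑ i ∈ Finset.Icc (1 : ℤ) n, ∑ j ∈ Finset.Icc (1 : ℤ) n, ∑ᶠ m : ℤ, A (i + n * m) j :=
        Finset.sum_comm
    _ = ∑ i ∈ Finset.Icc (1 : ℤ) n, ∑ j ∈ Finset.Icc (1 : ℤ) n, ∑ᶠ m : ℤ, A i (j + n * m) := by
        refine Finset.sum_congr rfl fun i _ => Finset.sum_congr rfl fun j _ => ?_
        rw [← finsum_comp_equiv (Equiv.neg ℤ)]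
        refine finsum_congr fun m => ?_
        rw [← apply_add_mul_add_mul_of_mem_ThetaSet hA i (j + n * m) (-m)]
        simp
    _ = ∑ i ∈ Finset.Icc (1 : ℤ) n, roM A i :=
        Finset.sum_congr rfl fun i _ => (finsum_eq_sum_finsum_period hp (hA.2.1 i)).symm

theorem sigmaTot_eq_sum_roM (hA : A ∈ ThetaSet n) :
    sigmaTot n A = ∑ i ∈ Finset.Icc (1 : ℤ) n, roM A i :=
  finsum_sum_comm _ (fun j i => A i j) fun i _ => hA.2.1 i

theorem roM_mem_LambdaSet (hA : A ∈ ThetaSigma n r) : roM A ∈ LambdaSet n r := by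
  refine ⟨fun i => ?_, (sigmaTot_eq_sum_roM hA.1).symm.trans hA.2⟩
  rw [roM, roM, ← finsum_comp_equiv (Equiv.addRight (n : ℤ))]
  refine finsum_congr fun j => ?_
  rw [Equiv.coe_addRight, ← hA.1.1 (i - n) j, sub_add_cancel]

theorem flip_mem_ThetaSigma (hn : 1 ≤ n) (hA : A ∈ ThetaSigma n r) : flip A ∈ ThetaSigma n r := by
  have hflip : flip A ∈ ThetaSet n := ⟨fun i j => hA.1.1 j i, hA.1.2.2, hA.1.2.1⟩
  refine ⟨hflip, ?_⟩
  rw [sigmaTot_eq_sum_roM hflip, ← hA.2, sigmaTot_eq_sum_roM hA.1]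
  exact sum_coM_eq_sum_roM hn hA.1

end PeriodicMatrices

section IntersectionMatrices

variable {n r : ℕ} {lam mu : ℤ → ℕ} {d : Equiv.Perm ℤ}

theorem Rset_inter_image_Rset (hn : 1 ≤ n) (hr : 1 ≤ r) (hm : mu ∈ LambdaSet n r) (S : Set ℤ)
    (l : ℤ) : S ∩ d '' Rset n r mu l = S ∩ (blockIdx n r mu ∘ ⇑d⁻¹) ⁻¹' {l} := by
  ext x
  simp only [Equiv.image_eq_preimage_symm, Set.mem_inter_iff, Set.mem_preimage,
    mem_Rset_iff hn hr hm, Function.comp_apply, Set.mem_singleton_iff, Equiv.Perm.coe_inv]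

theorem JMat_apply (hn : 1 ≤ n) (hr : 1 ≤ r) (hm : mu ∈ LambdaSet n r) (k l : ℤ) :
    JMat n r lam mu d k l = (Rset n r lam k ∩ (blockIdx n r mu ∘ ⇑d⁻¹) ⁻¹' {l}).ncard := by
  rw [JMat, Rset_inter_image_Rset hn hr hm]

theorem image_Rset_inter_image_inv_Rset (lam mu : ℤ → ℕ) (d : Equiv.Perm ℤ) (k l : ℤ) :
    d '' (Rset n r mu l ∩ ⇑d⁻¹ '' Rset n r lam k) = Rset n r lam k ∩ d '' Rset n r mu l := by
  rw [Set.image_inter d.injective, Equiv.Perm.coe_inv, Equiv.image_symm_image, Set.inter_comm]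

theorem flip_JMat (lam mu : ℤ → ℕ) (d : Equiv.Perm ℤ) :
    flip (JMat n r lam mu d) = JMat n r mu lam d⁻¹ := by
  funext l k
  rw [flip, JMat, JMat, ← image_Rset_inter_image_inv_Rset,
    Set.ncard_image_of_injective _ d.injective]

theorem support_JMat_finite (hn : 1 ≤ n) (hr : 1 ≤ r) (hl : lam ∈ LambdaSet n r)
    (hm : mu ∈ LambdaSet n r) (k : ℤ) : (JMat n r lam mu d k).support.Finite := by
  rw [funext (JMat_apply hn hr hm k)]
  exact support_ncard_fiber_finite (Rset_finite hn hl k) _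

theorem roM_JMat (hn : 1 ≤ n) (hr : 1 ≤ r) (hl : lam ∈ LambdaSet n r) (hm : mu ∈ LambdaSet n r)
    (d : Equiv.Perm ℤ) : roM (JMat n r lam mu d) = lam := by
  funext k
  simp only [roM, JMat_apply hn hr hm]
  rw [← finsum_mem_univ, finsum_mem_ncard_fiber (Rset_finite hn hl k), Set.preimage_univ,
    Set.inter_univ, Rset_ncard hn hl]

theorem coM_JMat (hn : 1 ≤ n) (hr : 1 ≤ r) (hl : lam ∈ LambdaSet n r) (hm : mu ∈ LambdaSet n r)
    (d : Equiv.Perm ℤ) : coM (JMat n r lam mu d) = mu :=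
  (congrArg roM (flip_JMat lam mu d)).trans (roM_JMat hn hr hm hl d⁻¹)

theorem JMat_add_period (hn : 1 ≤ n) (hr : 1 ≤ r) (hl : lam ∈ LambdaSet n r)
    (hm : mu ∈ LambdaSet n r) (hd : d ∈ AffSym r) (k l : ℤ) :
    JMat n r lam mu d (k + n) (l + n) = JMat n r lam mu d k l := by
  have hinv : ∀ x, d⁻¹ (x + r) = d⁻¹ x + r := (AffSym r).inv_mem hd
  simp only [JMat_apply hn hr hm]
  symm
  rw [← Set.ncard_image_of_injective _ (add_left_injective (r : ℤ))]
  congr 1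
  ext x
  obtain ⟨y, rfl⟩ : ∃ y, x = y + r := ⟨x - r, (sub_add_cancel x (r : ℤ)).symm⟩
  rw [(add_left_injective (r : ℤ)).mem_set_image]
  simp only [Set.mem_inter_iff, mem_Rset_iff hn hr hl, Set.mem_preimage, Function.comp_apply, hinv,
    blockIdx_add_period hn hr hl, blockIdx_add_period hn hr hm, Set.mem_singleton_iff,
    add_left_inj]

theorem JMat_mem_ThetaSigma (hn : 1 ≤ n) (hr : 1 ≤ r) (hl : lam ∈ LambdaSet n r)
    (hm : mu ∈ LambdaSet n r) (hd : d ∈ AffSym r) : JMat n r lam mu d ∈ ThetaSigma n r := by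
  have htheta : JMat n r lam mu d ∈ ThetaSet n := by
    refine ⟨JMat_add_period hn hr hl hm hd, support_JMat_finite hn hr hl hm, fun l => ?_⟩
    have := support_JMat_finite (d := d⁻¹) hn hr hm hl l
    rwa [← flip_JMat] at this
  refine ⟨htheta, ?_⟩
  rw [sigmaTot_eq_sum_roM htheta, roM_JMat hn hr hl hm]
  exact hl.2

end IntersectionMatrices

section Cells

variable {n r : ℕ} {A : ℤ → ℤ → ℕ}

/-- The cells of a matrix `A` of naturals: the position `(k, l)` carries `A k l` cells, numbered
from `1` to `A k l`. -/
@[ext]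
structure Cell (A : ℤ → ℤ → ℕ) where
  row : ℤ
  col : ℤ
  idx : ℤ
  idx_pos : 0 < idx
  idx_le : idx ≤ A row col

/-- The last integer before those attached to the cells at `(k, l)`, when the cells of row `k`
fill the block `R^{ro(A)}_k` from left to right. -/
noncomputable def cellStart (n r : ℕ) (A : ℤ → ℤ → ℕ) (k l : ℤ) : ℤ :=
  bnd n r (roM A) (k - 1) + partialSum (A k) (l - 1)

namespace Cell

/-- The cell of the transposed matrix corresponding to a cell. -/
def transpose (c : Cell A) : Cell (flip A) := ⟨c.col, c.row, c.idx, c.idx_pos, c.idx_le⟩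

theorem transpose_bijective : Function.Bijective (transpose : Cell A → Cell (flip A)) :=
  Function.bijective_iff_has_inverse.2 ⟨transpose, fun _ => rfl, fun _ => rfl⟩

/-- The translate of a cell by one period along the diagonal. -/
def shift (hA : A ∈ ThetaSet n) (c : Cell A) : Cell A :=
  ⟨c.row + n, c.col + n, c.idx, c.idx_pos, by rw [hA.1]; exact c.idx_le⟩

/-- Cells are ordered row by row, then from left to right, then by number. -/
noncomputable instance : LinearOrder (Cell A) :=
  LinearOrder.lift' (fun c => toLex (c.row, toLex (c.col, c.idx))) fun c c' h => by
    simpa [Cell.ext_iff] using h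

theorem lt_iff {c c' : Cell A} : c < c' ↔ c.row < c'.row ∨
    c.row = c'.row ∧ (c.col < c'.col ∨ c.col = c'.col ∧ c.idx < c'.idx) := by
  change toLex (c.row, toLex (c.col, c.idx)) < toLex (c'.row, toLex (c'.col, c'.idx)) ↔ _
  simp only [Prod.Lex.toLex_lt_toLex]

/-- The integer attached to a cell when the cells of `A` are laid out along `ℤ`, row `k` filling
the block `R^{ro(A)}_k`. -/
noncomputable def pos (n r : ℕ) (c : Cell A) : ℤ := cellStart n r A c.row c.col + c.idx

theorem pos_mem_Rset (hn : 1 ≤ n) (hA : A ∈ ThetaSigma n r) (c : Cell A) :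
    c.pos n r ∈ Rset n r (roM A) c.row := by
  have hrow := hA.1.2.1 c.row
  have hle : partialSum (A c.row) c.col ≤ roM A c.row := partialSum_le_finsum hrow c.col
  rw [partialSum_eq_add hrow] at hle
  have hpos := c.idx_pos
  have hidx := c.idx_le
  rw [Rset_eq_Ioc hn (roM_mem_LambdaSet hA), Set.mem_Ioc,
    bnd_eq_bnd_sub_one_add hn (roM_mem_LambdaSet hA) c.row, pos, cellStart]
  omega

theorem blockIdx_pos (hn : 1 ≤ n) (hr : 1 ≤ r) (hA : A ∈ ThetaSigma n r) (c : Cell A) :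
    blockIdx n r (roM A) (c.pos n r) = c.row :=
  (mem_Rset_iff hn hr (roM_mem_LambdaSet hA)).1 (pos_mem_Rset hn hA c)

theorem pos_strictMono (hn : 1 ≤ n) (hr : 1 ≤ r) (hA : A ∈ ThetaSigma n r) :
    StrictMono (pos n r : Cell A → ℤ) := by
  rintro c c' hlt
  obtain hrow | ⟨hrow, hcol | ⟨hcol, hidx⟩⟩ := lt_iff.1 hlt
  · rw [← blockIdx_pos hn hr hA c, ← blockIdx_pos hn hr hA c'] at hrow
    exact (gc_blockIdx_bnd hn hr (roM_mem_LambdaSet hA)).monotone_l.reflect_lt hrow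
  · have hfin := hA.1.2.1 c.row
    have hstep := partialSum_eq_add hfin c.col
    have hmono := partialSum_monotone hfin (show c.col ≤ c'.col - 1 by omega)
    have hidx := c.idx_le
    have hpos := c'.idx_pos
    rw [pos, pos, cellStart, cellStart, ← hrow]
    omega
  · rw [pos, pos, ← hrow, ← hcol]
    exact add_lt_add_right hidx _

theorem pos_surjective (hn : 1 ≤ n) (hr : 1 ≤ r) (hA : A ∈ ThetaSigma n r) :
    Function.Surjective (pos n r : Cell A → ℤ) := by
  intro x
  have hl := roM_mem_LambdaSet hA
  set k := blockIdx n r (roM A) x with hk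
  have hx := (mem_Rset_iff hn hr hl).2 hk.symm
  rw [Rset_eq_Ioc hn hl, bnd_eq_bnd_sub_one_add hn hl k, Set.mem_Ioc] at hx
  have hfin := hA.1.2.1 k
  obtain ⟨l, hlt, hle⟩ := exists_partialSum_lt_le hfin (sub_pos.2 hx.1) (sub_le_iff_le_add'.2 hx.2)
  have hstep := partialSum_eq_add hfin l
  refine ⟨⟨k, l, x - cellStart n r A k l, ?_, ?_⟩, add_sub_cancel _ _⟩ <;> rw [cellStart] <;> omega

theorem pos_bijective (hn : 1 ≤ n) (hr : 1 ≤ r) (hA : A ∈ ThetaSigma n r) :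
    Function.Bijective (pos n r : Cell A → ℤ) :=
  ⟨(pos_strictMono hn hr hA).injective, pos_surjective hn hr hA⟩

theorem pos_shift (hn : 1 ≤ n) (hA : A ∈ ThetaSet n) (c : Cell A) :
    (c.shift hA).pos n r = c.pos n r + r := by
  have hrow : A c.row = fun t => A (c.row + n) (t + n) := (funext (hA.1 c.row)).symm
  simp only [pos, shift, cellStart]
  rw [hrow, add_sub_right_comm, bnd_add_period hn, add_sub_right_comm, partialSum_comp_add_right]
  ring

theorem pos_mem_Ioc_cellStart_iff (hn : 1 ≤ n) (hr : 1 ≤ r) (hA : A ∈ ThetaSigma n r) (c : Cell A)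
    (k l : ℤ) :
    c.pos n r ∈ Set.Ioc (cellStart n r A k l) (cellStart n r A k l + A k l) ↔
      c.row = k ∧ c.col = l := by
  constructor
  · rintro ⟨hlt, hle⟩
    have hc : c = ⟨k, l, c.pos n r - cellStart n r A k l, by omega, by omega⟩ :=
      (pos_strictMono hn hr hA).injective (add_sub_cancel _ _).symm
    rw [hc]
    exact ⟨rfl, rfl⟩
  · rintro ⟨rfl, rfl⟩
    exact ⟨lt_add_of_pos_right _ c.idx_pos, add_le_add_right c.idx_le _⟩

end Cell

end Cells

section CellMatchings

variable {n r : ℕ} {A : ℤ → ℤ → ℕ} {lam mu : ℤ → ℕ} {d e : Equiv.Perm ℤ}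

/-- The permutation `d` carries the layout of the cells of the transpose of `A` to the layout of
the cells of `A`, cell by cell. -/
def IsCellMatching (n r : ℕ) (A : ℤ → ℤ → ℕ) (d : Equiv.Perm ℤ) : Prop :=
  ∀ c : Cell A, d (c.transpose.pos n r) = c.pos n r

theorem pos_transpose_bijective (hn : 1 ≤ n) (hr : 1 ≤ r) (hA : A ∈ ThetaSigma n r) :
    Function.Bijective fun c : Cell A => c.transpose.pos n r :=
  (Cell.pos_bijective hn hr (flip_mem_ThetaSigma hn hA)).comp Cell.transpose_bijective

theorem exists_isCellMatching (hn : 1 ≤ n) (hr : 1 ≤ r) (hA : A ∈ ThetaSigma n r) :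
    ∃ d, IsCellMatching n r A d :=
  ⟨(Equiv.ofBijective _ (pos_transpose_bijective hn hr hA)).symm.trans
    (Equiv.ofBijective _ (Cell.pos_bijective hn hr hA)), fun c =>
    congrArg (Cell.pos n r) (Equiv.ofBijective_symm_apply_apply _ _ c)⟩

namespace IsCellMatching

theorem inv (h : IsCellMatching n r A d) : IsCellMatching n r (flip A) d⁻¹ :=
  fun c => Equiv.Perm.inv_eq_iff_eq.2 (h c.transpose).symm

theorem unique (hn : 1 ≤ n) (hr : 1 ≤ r) (hA : A ∈ ThetaSigma n r) (hd : IsCellMatching n r A d)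
    (he : IsCellMatching n r A e) : d = e := by
  ext x
  obtain ⟨c, rfl⟩ := (pos_transpose_bijective hn hr hA).surjective x
  exact (hd c).trans (he c).symm

theorem mem_AffSym (hn : 1 ≤ n) (hr : 1 ≤ r) (hA : A ∈ ThetaSigma n r)
    (h : IsCellMatching n r A d) : d ∈ AffSym r := by
  intro x
  obtain ⟨c, rfl⟩ := (pos_transpose_bijective hn hr hA).surjective x
  have hflip := (flip_mem_ThetaSigma hn hA).1
  simp only [h c]
  rw [← Cell.pos_shift hn hflip, ← Cell.pos_shift hn hA.1]
  exact h (c.shift hA.1)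

theorem strictMonoOn_Rset_coM (hn : 1 ≤ n) (hr : 1 ≤ r) (hA : A ∈ ThetaSigma n r)
    (h : IsCellMatching n r A d) (l : ℤ) : StrictMonoOn d (Rset n r (coM A) l) := by
  have hflip := flip_mem_ThetaSigma hn hA
  have hcol : ∀ c : Cell A, c.transpose.pos n r ∈ Rset n r (coM A) l → c.col = l := fun c hc =>
    (Cell.blockIdx_pos hn hr hflip c.transpose).symm.trans
      ((mem_Rset_iff hn hr (roM_mem_LambdaSet hflip)).1 hc)
  intro x hx y hy hxy
  obtain ⟨c, rfl⟩ := (pos_transpose_bijective hn hr hA).surjective x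
  obtain ⟨c', rfl⟩ := (pos_transpose_bijective hn hr hA).surjective y
  have hlt := Cell.lt_iff.1 ((Cell.pos_strictMono hn hr hflip).lt_iff_lt.1 hxy)
  simp only [Cell.transpose, hcol c hx, hcol c' hy, lt_irrefl, false_or, true_and] at hlt
  simp only [h c, h c']
  refine Cell.pos_strictMono hn hr hA (Cell.lt_iff.2 ?_)
  rw [hcol c hx, hcol c' hy]
  simpa using hlt

theorem mem_DRep2 (hn : 1 ≤ n) (hr : 1 ≤ r) (hA : A ∈ ThetaSigma n r)
    (h : IsCellMatching n r A d) : d ∈ DRep2 n r (roM A) (coM A) := by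
  have hflip := flip_mem_ThetaSigma hn hA
  exact (mem_DRep2_iff hn hr (roM_mem_LambdaSet hA) (roM_mem_LambdaSet hflip)).2
    ⟨h.mem_AffSym hn hr hA, h.inv.strictMonoOn_Rset_coM hn hr hflip,
      h.strictMonoOn_Rset_coM hn hr hA⟩

theorem JMat_eq (hn : 1 ≤ n) (hr : 1 ≤ r) (hA : A ∈ ThetaSigma n r) (h : IsCellMatching n r A d) :
    JMat n r (roM A) (coM A) d = A := by
  have hflip := flip_mem_ThetaSigma hn hA
  have hco : coM A ∈ LambdaSet n r := roM_mem_LambdaSet hflip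
  funext k l
  have hIoc : Rset n r (roM A) k ∩ d '' Rset n r (coM A) l =
      Set.Ioc (cellStart n r A k l) (cellStart n r A k l + A k l) := by
    ext x
    obtain ⟨c, rfl⟩ := Cell.pos_surjective hn hr hA x
    have hinv : d⁻¹ (c.pos n r) = c.transpose.pos n r := h.inv c.transpose
    rw [Cell.pos_mem_Ioc_cellStart_iff hn hr hA, Rset_inter_image_Rset hn hr hco, Set.mem_inter_iff,
      mem_Rset_iff hn hr (roM_mem_LambdaSet hA), Cell.blockIdx_pos hn hr hA, Set.mem_preimage,
      Function.comp_apply, hinv, Set.mem_singleton_iff]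
    exact and_congr_right' (Eq.congr_left (Cell.blockIdx_pos hn hr hflip c.transpose))
  rw [JMat, hIoc, ncard_Ioc, add_sub_cancel_left, Int.toNat_natCast]

end IsCellMatching

theorem Rset_inter_image_Rset_eq_Ioc (hn : 1 ≤ n) (hr : 1 ≤ r) (hl : lam ∈ LambdaSet n r)
    (hm : mu ∈ LambdaSet n r) {k : ℤ} (hmono : StrictMonoOn ⇑d⁻¹ (Rset n r lam k)) (l : ℤ) :
    Rset n r lam k ∩ d '' Rset n r mu l =
      Set.Ioc (cellStart n r (JMat n r lam mu d) k l)
        (cellStart n r (JMat n r lam mu d) k l + JMat n r lam mu d k l) := by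
  have hblock : MonotoneOn (blockIdx n r mu ∘ ⇑d⁻¹) (Rset n r lam k) :=
    (gc_blockIdx_bnd hn hr hm).monotone_l.comp_monotoneOn hmono.monotoneOn
  have hentry := JMat_apply (lam := lam) (d := d) hn hr hm k
  have hstep := partialSum_eq_add (support_JMat_finite (d := d) hn hr hl hm k) l
  rw [Rset_inter_image_Rset hn hr hm, cellStart, roM_JMat hn hr hl hm, add_assoc, ← Nat.cast_add,
    ← hstep]
  rw [Rset_eq_Ioc hn hl] at hblock hentry ⊢
  exact Ioc_inter_fiber_of_monotoneOn hblock hentry l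

theorem isCellMatching_JMat (hn : 1 ≤ n) (hr : 1 ≤ r) (hl : lam ∈ LambdaSet n r)
    (hm : mu ∈ LambdaSet n r) (hd : d ∈ DRep2 n r lam mu) :
    IsCellMatching n r (JMat n r lam mu d) d := by
  obtain ⟨-, hinv, hmono⟩ := (mem_DRep2_iff hn hr hl hm).1 hd
  set A := JMat n r lam mu d with hA
  intro c
  have hsource : Rset n r mu c.col ∩ ⇑d⁻¹ '' Rset n r lam c.row =
      Set.Ioc (cellStart n r (flip A) c.col c.row)
        (cellStart n r (flip A) c.col c.row + A c.row c.col) := by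
    have := Rset_inter_image_Rset_eq_Ioc (d := d⁻¹) hn hr hm hl (k := c.col)
      (by rw [inv_inv]; exact hmono _) c.row
    rwa [← flip_JMat, ← hA] at this
  have himage := image_Rset_inter_image_inv_Rset (n := n) (r := r) lam mu d c.row c.col
  rw [hsource, Rset_inter_image_Rset_eq_Ioc hn hr hl hm (hinv _), ← hA] at himage
  have hmonoOn := (hmono c.col).mono (hsource ▸ Set.inter_subset_left)
  refine (apply_eq_add_of_strictMonoOn_Ioc hmonoOn himage
    ⟨lt_add_of_pos_right _ c.idx_pos, add_le_add_right c.idx_le _⟩).trans ?_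
  rw [add_sub_cancel_left]
  rfl

theorem eq_of_JMat_eq (hn : 1 ≤ n) (hr : 1 ≤ r) (hl : lam ∈ LambdaSet n r)
    (hm : mu ∈ LambdaSet n r) (hd : d ∈ DRep2 n r lam mu) (he : e ∈ DRep2 n r lam mu)
    (hJ : JMat n r lam mu d = JMat n r lam mu e) : d = e :=
  (isCellMatching_JMat hn hr hl hm hd).unique hn hr (JMat_mem_ThetaSigma hn hr hl hm hd.1.1)
    (hJ ▸ isCellMatching_JMat hn hr hl hm he)

end CellMatchings

/-- the map `J_Δ : (λ, d, μ) ↦ (|R^λ_k ∩ d(R^μ_l)|)_{k,l}` is a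
well-defined bijection from `{(λ,d,μ) | λ, μ ∈ Λ_Δ(n,r), d ∈ D^Δ_{λ,μ}}` onto
`Θ_Δ(n,r)`, and `ro(J_Δ(λ,d,μ)) = λ`, `co(J_Δ(λ,d,μ)) = μ`. -/
theorem JMat_bijOn (n r : ℕ) (hn : 1 ≤ n) (hr : 1 ≤ r) :
    Set.BijOn (fun p : (ℤ → ℕ) × Equiv.Perm ℤ × (ℤ → ℕ) => JMat n r p.1 p.2.2 p.2.1)
      {p : (ℤ → ℕ) × Equiv.Perm ℤ × (ℤ → ℕ) |
        p.1 ∈ LambdaSet n r ∧ p.2.2 ∈ LambdaSet n r ∧ p.2.1 ∈ DRep2 n r p.1 p.2.2}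
      {A : ℤ → ℤ → ℕ | A ∈ ThetaSet n ∧ sigmaTot n A = r} ∧
    ∀ lam mu : ℤ → ℕ, ∀ d : Equiv.Perm ℤ,
      lam ∈ LambdaSet n r → mu ∈ LambdaSet n r → d ∈ DRep2 n r lam mu →
      roM (JMat n r lam mu d) = lam ∧ coM (JMat n r lam mu d) = mu := by
  refine ⟨⟨?mapsTo, ?injOn, ?surjOn⟩, fun lam mu d hl hm _ =>
    ⟨roM_JMat hn hr hl hm d, coM_JMat hn hr hl hm d⟩⟩
  case mapsTo =>
    rintro ⟨lam, d, mu⟩ ⟨hl, hm, hd⟩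
    exact JMat_mem_ThetaSigma hn hr hl hm hd.1.1
  case injOn =>
    rintro ⟨lam, d, mu⟩ ⟨hl, hm, hd⟩ ⟨lam', e, mu'⟩ ⟨hl', hm', he⟩ hJ
    obtain rfl : lam = lam' := (roM_JMat hn hr hl hm d).symm.trans
      ((congrArg roM hJ).trans (roM_JMat hn hr hl' hm' e))
    obtain rfl : mu = mu' := (coM_JMat hn hr hl hm d).symm.trans
      ((congrArg coM hJ).trans (coM_JMat hn hr hl' hm' e))
    obtain rfl : d = e := eq_of_JMat_eq hn hr hl hm hd he hJ
    rfl
  case surjOn =>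
    intro A hA
    obtain ⟨d, hd⟩ := exists_isCellMatching hn hr hA
    exact ⟨(roM A, d, coM A), ⟨roM_mem_LambdaSet hA,
      roM_mem_LambdaSet (flip_mem_ThetaSigma hn hA), hd.mem_DRep2 hn hr hA⟩, hd.JMat_eq hn hr hA⟩
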